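/- (Characterization F.) Γ is a distance-regular digraph if and only if for every vertex x ∈ X the in-distance partition {Γ_0←(x), Γ_1←(x), …, Γ_D←(x)} of X is equitable with parameters independent of x, i.e. there exist integers e→_{ij} and e←_{ij} (0 ≤ i,j ≤ D) such that for every x ∈ X, every 0 ≤ i,j ≤ D and every y ∈ Γ_i←(x): |Γ_1→(y) ∩ Γ_j←(x)| = e→_{ij} and |Γ_1←(y) ∩ Γ_j←(x)| = e←_{ij}. -/

import Mathlib

/-!
Write `A_i = dmat A i`, so `A_0 = 1` and `A_1 = A`. Distance-regularity says exactly that every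
`A_j * A` and every `A_j * Aᴴ` is a linear combination of the `A_i`; the in-distance condition says
the same of `A * A_j` and `Aᴴ * A_j`. Hence it suffices that `A` and `Aᴴ` commute with every `A_j`,
and then the parameters of one condition serve for the other.

* `A_j * A` involves `A_{j+1}` with a nonzero coefficient and no `A_i` with `i > j + 1`, so
  inductively each `A_j` is a polynomial in `A`. In `commute_dmat` this is used in the form: whatever
  commutes with `A` commutes with each `A_j`.
* Therefore `A` commutes with `A * Aᴴ = A_1 * Aᴴ`, a combination of the `A_i`. A complex matrix
  `A` that commutes with `A * Aᴴ` is normal (`conjTranspose_commute_of_quasinormal`), so `Aᴴ`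
  commutes with `A`, and hence with each `A_j`.

The converse is the same implication applied to the reversed digraph `Aᵀ`, since the in-distance
condition for `A` is literally distance-regularity of `Aᵀ`.
-/

open Matrix Polynomial BigOperators
open scoped Classical

/-- Distance from `x` to `y` in the digraph with adjacency matrix `A`:
the least `n` with `(A ^ n) x y ≠ 0`. -/
noncomputable def gdist {X : Type*} [Fintype X] (A : Matrix X X ℂ) (x y : X) : ℕ :=
  sInf {n : ℕ | (A ^ n) x y ≠ 0}

/-- Diameter of the digraph with adjacency matrix `A`. -/
noncomputable def gdiam {X : Type*} [Fintype X] (A : Matrix X X ℂ) : ℕ :=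
  Finset.univ.sup fun p : X × X => gdist A p.1 p.2

/-- The distance-`i` matrix of the digraph with adjacency matrix `A`. -/
noncomputable def dmat {X : Type*} [Fintype X] (A : Matrix X X ℂ) (i : ℕ) : Matrix X X ℂ :=
  fun x y => if gdist A x y = i then 1 else 0

/-- `Γ = Γ(A)` is a distance-regular digraph: the out-distance partition around every
vertex is equitable with parameters independent of the vertex. -/
def IsDRD {X : Type*} [Fintype X] (A : Matrix X X ℂ) (D : ℕ) : Prop :=
  ∃ dOut dIn : ℕ → ℕ → ℕ, ∀ x : X, ∀ i, i ≤ D → ∀ j, j ≤ D → ∀ y : X, gdist A x y = i →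
    (Finset.univ.filter fun z : X => gdist A y z = 1 ∧ gdist A x z = j).card = dOut i j ∧
    (Finset.univ.filter fun z : X => gdist A z y = 1 ∧ gdist A x z = j).card = dIn i j

/-! ### Distances and distance matrices -/

section Distance

variable {X : Type*} [Fintype X] {A : Matrix X X ℂ}

lemma gdist_transpose (A : Matrix X X ℂ) (x y : X) : gdist Aᵀ x y = gdist A y x := by
  unfold gdist
  simp only [← Matrix.transpose_pow, Matrix.transpose_apply]

lemma gdist_le {n : ℕ} {x y : X} (h : (A ^ n) x y ≠ 0) : gdist A x y ≤ n := Nat.sInf_le h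

lemma pow_gdist_ne (hconn : ∀ x y : X, ∃ n : ℕ, (A ^ n) x y ≠ 0) (x y : X) :
    (A ^ gdist A x y) x y ≠ 0 := Nat.sInf_mem (s := {n : ℕ | (A ^ n) x y ≠ 0}) (hconn x y)

lemma gdist_le_gdiam (A : Matrix X X ℂ) (x y : X) : gdist A x y ≤ gdiam A :=
  Finset.le_sup (f := fun p : X × X => gdist A p.1 p.2) (Finset.mem_univ (x, y))

lemma gdiam_transpose (A : Matrix X X ℂ) : gdiam Aᵀ = gdiam A := by
  apply le_antisymm
  · refine Finset.sup_le fun p _ => ?_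
    rw [gdist_transpose]
    exact gdist_le_gdiam A _ _
  · refine Finset.sup_le fun p _ => ?_
    rw [← gdist_transpose]
    exact gdist_le_gdiam Aᵀ _ _

open scoped ComplexOrder in
lemma pow_entry_nonneg (h01 : ∀ x y : X, A x y = 0 ∨ A x y = 1) (n : ℕ) :
    ∀ x y : X, 0 ≤ (A ^ n) x y := by
  have hA : ∀ x y : X, 0 ≤ A x y := fun x y => by
    rcases h01 x y with h | h <;> rw [h]
    exact zero_le_one
  induction n with
  | zero =>
    intro x y
    rw [pow_zero, Matrix.one_apply]
    split_ifs
    · exact zero_le_one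
    · exact le_rfl
  | succ n ih =>
    intro x y
    rw [pow_succ, Matrix.mul_apply]
    exact Finset.sum_nonneg fun z _ => mul_nonneg (ih x z) (hA z y)

open scoped ComplexOrder in
/-- The entries of the powers of `A` are nonnegative, so no cancellation can destroy a walk. -/
lemma gdist_le_succ (h01 : ∀ x y : X, A x y = 0 ∨ A x y = 1)
    (hconn : ∀ x y : X, ∃ n : ℕ, (A ^ n) x y ≠ 0) {x y z : X} (h : A z y ≠ 0) :
    gdist A x y ≤ gdist A x z + 1 := by
  apply gdist_le
  rw [pow_succ, Matrix.mul_apply]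
  have hA : ∀ x y : X, 0 ≤ A x y := fun x y => by simpa using pow_entry_nonneg h01 1 x y
  intro h0
  rw [Finset.sum_eq_zero_iff_of_nonneg
    fun w _ => mul_nonneg (pow_entry_nonneg h01 _ x w) (hA w y)] at h0
  exact mul_ne_zero (pow_gdist_ne hconn x z) h (h0 z (Finset.mem_univ z))

/-- The last-but-one vertex of a shortest walk. -/
lemma exists_pred (h01 : ∀ x y : X, A x y = 0 ∨ A x y = 1)
    (hconn : ∀ x y : X, ∃ n : ℕ, (A ^ n) x y ≠ 0) {x y : X} {j : ℕ} (h : gdist A x y = j + 1) :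
    ∃ z, gdist A x z = j ∧ A z y ≠ 0 := by
  have h1 := pow_gdist_ne hconn x y
  rw [h, pow_succ, Matrix.mul_apply] at h1
  obtain ⟨z, -, hz⟩ := Finset.exists_ne_zero_of_sum_ne_zero h1
  have h2 := gdist_le (left_ne_zero_of_mul hz)
  have h3 := gdist_le_succ h01 hconn (x := x) (right_ne_zero_of_mul hz)
  exact ⟨z, by omega, right_ne_zero_of_mul hz⟩

lemma gdist_eq_one_iff (hdiag : ∀ x : X, A x x = 0)
    (hconn : ∀ x y : X, ∃ n : ℕ, (A ^ n) x y ≠ 0) (x y : X) :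
    gdist A x y = 1 ↔ A x y ≠ 0 := by
  constructor
  · intro h
    simpa [h] using pow_gdist_ne hconn x y
  · intro h
    have h1 : gdist A x y ≤ 1 := gdist_le (by simpa using h)
    have h2 : gdist A x y ≠ 0 := by
      intro h0
      have := pow_gdist_ne hconn x y
      rw [h0, pow_zero, Matrix.one_apply] at this
      have hxy : x = y := by
        by_contra hne
        simp [hne] at this
      exact h (hxy ▸ hdiag x)
    omega

lemma dmat_zero (hconn : ∀ x y : X, ∃ n : ℕ, (A ^ n) x y ≠ 0) : dmat A 0 = 1 := by
  ext x y
  rw [dmat, Matrix.one_apply]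
  congr 1
  apply propext
  constructor
  · intro h
    have := pow_gdist_ne hconn x y
    rw [h, pow_zero, Matrix.one_apply] at this
    by_contra hne
    simp [hne] at this
  · rintro rfl
    exact Nat.le_zero.1 (gdist_le (by simp))

lemma dmat_one (h01 : ∀ x y : X, A x y = 0 ∨ A x y = 1) (hdiag : ∀ x : X, A x x = 0)
    (hconn : ∀ x y : X, ∃ n : ℕ, (A ^ n) x y ≠ 0) : dmat A 1 = A := by
  ext x y
  rw [dmat]
  simp only [gdist_eq_one_iff hdiag hconn]
  rcases h01 x y with h | h <;> simp [h]

lemma dmat_eq_zero {i : ℕ} (h : ∀ x y : X, gdist A x y ≠ i) : dmat A i = 0 := by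
  ext x y
  simp [dmat, h x y]

lemma conjTranspose_eq_transpose {X : Type*} {A : Matrix X X ℂ}
    (h01 : ∀ x y : X, A x y = 0 ∨ A x y = 1) : Aᴴ = Aᵀ := by
  ext x y
  rcases h01 y x with h | h <;> simp [h]

/-- Products of distance matrices count vertices at prescribed distances. -/
lemma dmat_mul_dmat_apply (A : Matrix X X ℂ) (i j : ℕ) (x y : X) :
    (dmat A i * dmat A j) x y =
      ((Finset.univ.filter fun z : X => gdist A x z = i ∧ gdist A z y = j).card : ℂ) := by
  rw [Matrix.mul_apply, Finset.card_filter]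
  push_cast
  refine Finset.sum_congr rfl fun z _ => ?_
  simp only [dmat]
  split_ifs <;> simp_all

lemma dmat_mul_dmat_transpose_apply (A : Matrix X X ℂ) (i j : ℕ) (x y : X) :
    (dmat A i * (dmat A j)ᵀ) x y =
      ((Finset.univ.filter fun z : X => gdist A x z = i ∧ gdist A y z = j).card : ℂ) := by
  rw [Matrix.mul_apply, Finset.card_filter]
  push_cast
  refine Finset.sum_congr rfl fun z _ => ?_
  simp only [dmat, Matrix.transpose_apply]
  split_ifs <;> simp_all

lemma dmat_transpose_mul_dmat_apply (A : Matrix X X ℂ) (i j : ℕ) (x y : X) :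
    ((dmat A i)ᵀ * dmat A j) x y =
      ((Finset.univ.filter fun z : X => gdist A z x = i ∧ gdist A z y = j).card : ℂ) := by
  rw [Matrix.mul_apply, Finset.card_filter]
  push_cast
  refine Finset.sum_congr rfl fun z _ => ?_
  simp only [dmat, Matrix.transpose_apply]
  split_ifs <;> simp_all

/-- A matrix whose entries depend only on the distance is a combination of the `A_i`. -/
lemma eq_sum_dmat {M : Matrix X X ℂ} {c : ℕ → ℂ} (h : ∀ x y : X, M x y = c (gdist A x y)) :
    M = ∑ i ∈ Finset.range (gdiam A + 1), c i • dmat A i := by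
  ext x y
  rw [Matrix.sum_apply, Finset.sum_eq_single (gdist A x y)]
  · simp [dmat, h x y]
  · intro i _ hi
    simp [dmat, hi.symm]
  · intro hn
    exact absurd (Finset.mem_range.2 (Nat.lt_succ_of_le (gdist_le_gdiam A x y))) hn

end Distance

/-! ### Quasinormal matrices -/

open scoped ComplexOrder in
/-- In finite dimension quasinormal matrices are normal. With `B = A * Aᴴ - Aᴴ * A`, the
hypothesis gives `tr (Bᴴ * B) = 0`. -/
lemma conjTranspose_commute_of_quasinormal {X : Type*} [Fintype X] {A : Matrix X X ℂ}
    (h : Commute A (A * Aᴴ)) : Commute Aᴴ A := by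
  have h1 : A * (A * Aᴴ) = A * Aᴴ * A := h
  have hB : (A * Aᴴ - Aᴴ * A)ᴴ = A * Aᴴ - Aᴴ * A := by
    simp [Matrix.conjTranspose_sub, Matrix.conjTranspose_mul]
  have hAB : A * (A * Aᴴ - Aᴴ * A) = 0 := by
    rw [mul_sub, h1, ← mul_assoc, sub_self]
  have htr : ((A * Aᴴ - Aᴴ * A)ᴴ * (A * Aᴴ - Aᴴ * A)).trace = 0 := by
    rw [hB]
    -- Since `A * B = 0`, `B * B = A * Aᴴ * B`.
    have e1 : (A * Aᴴ - Aᴴ * A) * (A * Aᴴ - Aᴴ * A) =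
        A * Aᴴ * (A * Aᴴ) - A * Aᴴ * (Aᴴ * A) := by
      rw [sub_mul, mul_assoc Aᴴ, hAB, mul_zero, sub_zero, mul_sub]
    have e2 : (A * Aᴴ * (Aᴴ * A)).trace = (A * Aᴴ * (A * Aᴴ)).trace := by
      calc (A * Aᴴ * (Aᴴ * A)).trace = (A * Aᴴ * Aᴴ * A).trace := by rw [mul_assoc (A * Aᴴ)]
        _ = (A * (A * Aᴴ * Aᴴ)).trace := Matrix.trace_mul_comm _ _
        _ = (A * (A * Aᴴ) * Aᴴ).trace := by rw [mul_assoc A (A * Aᴴ)]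
        _ = (A * Aᴴ * (A * Aᴴ)).trace := by rw [h1, mul_assoc (A * Aᴴ)]
    rw [e1, Matrix.trace_sub, e2, sub_self]
  exact (sub_eq_zero.1 (Matrix.trace_conjTranspose_mul_self_eq_zero_iff.1 htr)).symm

/-! ### Commutation and reversal of the digraph -/

section Main

variable {X : Type*} [Fintype X] {A : Matrix X X ℂ}

/-- Each `A_j` lies in the algebra generated by `A`, stated through commutants. The hypothesis
is the half of distance-regularity saying that `A_j * A` is a combination of the `A_i`. -/
lemma commute_dmat (h01 : ∀ x y : X, A x y = 0 ∨ A x y = 1) (hdiag : ∀ x : X, A x x = 0)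
    (hconn : ∀ x y : X, ∃ n : ℕ, (A ^ n) x y ≠ 0)
    (hIn : ∀ j, ∃ c : ℕ → ℕ, ∀ x y : X,
      (Finset.univ.filter fun z : X => gdist A x z = j ∧ gdist A z y = 1).card =
        c (gdist A x y))
    {M : Matrix X X ℂ} (hM : Commute M A) (j : ℕ) : Commute M (dmat A j) := by
  induction j using Nat.strong_induction_on with
  | _ n ih =>
  rcases n with _ | j
  · rw [dmat_zero hconn]
    exact Commute.one_right M
  by_cases hex : ∃ x y : X, gdist A x y = j + 1
  swap
  · push Not at hex
    rw [dmat_eq_zero hex]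
    exact Commute.zero_right M
  obtain ⟨x, y, hxy⟩ := hex
  obtain ⟨c, hc⟩ := hIn j
  have hc0 : (c (j + 1) : ℂ) ≠ 0 := by
    obtain ⟨z, hz, hzy⟩ := exists_pred h01 hconn hxy
    rw [← hxy, ← hc x y, Nat.cast_ne_zero, Finset.card_ne_zero]
    exact ⟨z, by simpa using ⟨hz, (gdist_eq_one_iff hdiag hconn z y).2 hzy⟩⟩
  have hsum : dmat A j * A = ∑ i ∈ Finset.range (gdiam A + 1), (c i : ℂ) • dmat A i := by
    refine eq_sum_dmat (c := fun i => (c i : ℂ)) fun u v => ?_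
    have e := dmat_mul_dmat_apply A j 1 u v
    rw [dmat_one h01 hdiag hconn] at e
    rw [e, hc]
  have hmem : j + 1 ∈ Finset.range (gdiam A + 1) :=
    Finset.mem_range.2 (by have := gdist_le_gdiam A x y; omega)
  rw [← Finset.add_sum_erase _ _ hmem] at hsum
  have hrest : Commute M (∑ i ∈ (Finset.range (gdiam A + 1)).erase (j + 1),
      (c i : ℂ) • dmat A i) := by
    refine Commute.sum_right _ _ _ fun i hi => ?_
    have hne := Finset.ne_of_mem_erase hi
    rcases lt_or_gt_of_ne hne with hlt | hgt
    · exact (ih i hlt).smul_right _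
    -- Distances grow by at most one along an arc, so the terms with `i > j + 1` vanish.
    · have hz : (c i : ℂ) • dmat A i = 0 := by
        by_cases hi2 : ∃ u v : X, gdist A u v = i
        · obtain ⟨u, v, rfl⟩ := hi2
          rw [← hc u v, Finset.card_eq_zero.2, Nat.cast_zero, zero_smul]
          refine Finset.filter_eq_empty_iff.2 fun z _ hz => ?_
          have := gdist_le_succ h01 hconn (x := u)
            ((gdist_eq_one_iff hdiag hconn z v).1 hz.2)
          omega
        · push Not at hi2
          rw [dmat_eq_zero hi2, smul_zero]
      rw [hz]
      exact Commute.zero_right M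
  have hprod : Commute M (dmat A j * A) := (ih j (Nat.lt_succ_self j)).mul_right hM
  have hlead : Commute M ((c (j + 1) : ℂ) • dmat A (j + 1)) := by
    rw [eq_sub_of_add_eq hsum.symm]
    exact hprod.sub_right hrest
  have := hlead.smul_right (c (j + 1) : ℂ)⁻¹
  rwa [inv_smul_smul₀ hc0] at this

/-- Distance-regularity passes to the reversed digraph. -/
lemma IsDRD.transpose (h01 : ∀ x y : X, A x y = 0 ∨ A x y = 1) (hdiag : ∀ x : X, A x x = 0)
    (hconn : ∀ x y : X, ∃ n : ℕ, (A ^ n) x y ≠ 0) (h : IsDRD A (gdiam A)) :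
    IsDRD Aᵀ (gdiam A) := by
  obtain ⟨dOut, dIn, hd⟩ := h
  have hone := dmat_one h01 hdiag hconn
  have hIn : ∀ j, ∃ c : ℕ → ℕ, ∀ x y : X,
      (Finset.univ.filter fun z : X => gdist A x z = j ∧ gdist A z y = 1).card =
        c (gdist A x y) := by
    intro j
    by_cases hj : j ≤ gdiam A
    · refine ⟨fun i => dIn i j, fun x y => ?_⟩
      refine Eq.trans ?_ (hd x _ (gdist_le_gdiam A x y) j hj y rfl).2
      simp only [and_comm]
    · refine ⟨fun _ => 0, fun x y => ?_⟩
      refine Finset.card_eq_zero.2 (Finset.filter_eq_empty_iff.2 fun z _ hz => ?_)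
      exact hj (hz.1 ▸ gdist_le_gdiam A x z)
  have hcomm := fun {M : Matrix X X ℂ} => commute_dmat (M := M) h01 hdiag hconn hIn
  have hAAH : Commute A (A * Aᴴ) := by
    by_cases hD : 1 ≤ gdiam A
    · have hsum : A * Aᴴ = ∑ i ∈ Finset.range (gdiam A + 1), (dOut i 1 : ℂ) • dmat A i := by
        refine eq_sum_dmat (c := fun i => (dOut i 1 : ℂ)) fun x y => ?_
        have e := dmat_mul_dmat_transpose_apply A 1 1 x y
        rw [hone] at e
        rw [conjTranspose_eq_transpose h01, e,
          ← (hd x _ (gdist_le_gdiam A x y) 1 hD y rfl).1]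
        simp only [and_comm]
      rw [hsum]
      exact Commute.sum_right _ _ _ fun i _ => (hcomm (Commute.refl A) i).smul_right _
    -- In diameter `0` there are no arcs.
    · have hA : A = 0 := by
        rw [← hone]
        exact dmat_eq_zero fun x y hxy => hD (hxy ▸ gdist_le_gdiam A x y)
      rw [hA]
      exact Commute.zero_left _
  have hT : Commute Aᵀ A := by
    rw [← conjTranspose_eq_transpose h01]
    exact conjTranspose_commute_of_quasinormal hAAH
  refine ⟨fun i j => dOut i j, fun i j => dIn i j, fun x i hi j hj y hy => ?_⟩
  simp only [gdist_transpose] at hy ⊢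
  obtain ⟨d1, d2⟩ := hd y i hi j hj x hy
  constructor
  · have e := dmat_transpose_mul_dmat_apply A 1 j y x
    rw [hone, (hcomm hT j).eq] at e
    have e' := dmat_mul_dmat_transpose_apply A j 1 y x
    rw [hone, e] at e'
    rw [Nat.cast_inj.1 e', ← d1]
    simp only [and_comm]
  · have e := dmat_mul_dmat_apply A 1 j y x
    rw [hone, (hcomm (Commute.refl A) j).eq] at e
    have e' := dmat_mul_dmat_apply A j 1 y x
    rw [hone, e] at e'
    rw [Nat.cast_inj.1 e', ← d2]
    simp only [and_comm]

/-- The in-distance condition for `A` is distance-regularity of `Aᵀ`, with the two parameter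
families exchanged. -/
lemma isDRD_transpose_iff (A : Matrix X X ℂ) (D : ℕ) :
    IsDRD Aᵀ D ↔
      ∃ eOut eIn : ℕ → ℕ → ℕ, ∀ x : X, ∀ i, i ≤ D → ∀ j, j ≤ D → ∀ y : X,
        gdist A y x = i →
        (Finset.univ.filter fun z : X => gdist A y z = 1 ∧ gdist A z x = j).card = eOut i j ∧
        (Finset.univ.filter fun z : X => gdist A z y = 1 ∧ gdist A z x = j).card = eIn i j := by
  simp only [IsDRD, gdist_transpose]
  exact ⟨fun ⟨a, b, h⟩ => ⟨b, a, fun x i hi j hj y hy => (h x i hi j hj y hy).symm⟩,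
    fun ⟨a, b, h⟩ => ⟨b, a, fun x i hi j hj y hy => (h x i hi j hj y hy).symm⟩⟩

end Main

/-- Characterization F: `Γ` is a distance-regular digraph iff for every vertex `x`
the in-distance partition `{Γ_0←(x), …, Γ_D←(x)}` is equitable with parameters
independent of `x`. -/
theorem stmt15 {X : Type*} [Fintype X] [DecidableEq X] [Nonempty X] (A : Matrix X X ℂ)
    (h01 : ∀ x y : X, A x y = 0 ∨ A x y = 1)
    (hdiag : ∀ x : X, A x x = 0)
    (hconn : ∀ x y : X, ∃ n : ℕ, (A ^ n) x y ≠ 0)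
    (D : ℕ) (hD : D = gdiam A) :
    IsDRD A D ↔
      ∃ eOut eIn : ℕ → ℕ → ℕ, ∀ x : X, ∀ i, i ≤ D → ∀ j, j ≤ D → ∀ y : X,
        gdist A y x = i →
        (Finset.univ.filter fun z : X => gdist A y z = 1 ∧ gdist A z x = j).card = eOut i j ∧
        (Finset.univ.filter fun z : X => gdist A z y = 1 ∧ gdist A z x = j).card = eIn i j := by
  subst hD
  -- The lemmas above form matrix powers with the classical equality test.
  obtain rfl : ‹DecidableEq X› = fun a b => Classical.propDecidable (a = b) :=
    Subsingleton.elim _ _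
  rw [← isDRD_transpose_iff]
  refine ⟨IsDRD.transpose h01 hdiag hconn, fun h => ?_⟩
  rw [← gdiam_transpose] at h ⊢
  have hconn' : ∀ x y : X, ∃ n : ℕ, (Aᵀ ^ n) x y ≠ 0 := fun x y => by
    simp only [← Matrix.transpose_pow, Matrix.transpose_apply]
    exact hconn y x
  exact IsDRD.transpose (A := Aᵀ) (fun x y => h01 y x) hdiag hconn' h
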